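/- Let n ≥ 4 and let 𝒮 be a nonempty finite family of pairwise disjoint subsets of {1,…,n}, each of cardinality between 2 and n−2. Then the polytope Δ_{n,2} ∩ ⋂_{S∈𝒮} {x ∈ ℝ^n : ∑_{i∈S} x_i ≤ 1} is an admissible polytope for G_{n,2}, i.e., it equals P_σ for some admissible set σ; moreover, if 𝒮 does not consist of exactly two sets whose union is all of {1,…,n}, this admissible polytope has affine dimension n−1. -/

import Mathlib

/-- The hypersimplex `Δ_{n,k} ⊂ ℝ^n`. -/
def hypersimplex (n k : ℕ) : Set (Fin n → ℝ) :=
  {x | (∀ i, 0 ≤ x i ∧ x i ≤ 1) ∧ ∑ i, x i = (k : ℝ)}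

/-- The Plücker coordinate `P^{ij}(A) = A_{i1}A_{j2} − A_{j1}A_{i2}` of an
n×2 complex matrix. -/
def plucker {n : ℕ} (A : Matrix (Fin n) (Fin 2) ℂ) (i j : Fin n) : ℂ :=
  A i 0 * A j 1 - A j 0 * A i 1

/-- The Plücker support `σ(A) = {{i,j} : P^{ij}(A) ≠ 0}` of an n×2 matrix. -/
def pluckerSupport {n : ℕ} (A : Matrix (Fin n) (Fin 2) ℂ) : Set (Finset (Fin n)) :=
  {p | ∃ i j : Fin n, i ≠ j ∧ p = {i, j} ∧ plucker A i j ≠ 0}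

/-- A set `σ` of 2-element subsets of `{1,…,n}` is admissible for `G_{n,2}`
if it is the Plücker support of some rank-2 complex n×2 matrix. -/
def IsAdmissible {n : ℕ} (σ : Set (Finset (Fin n))) : Prop :=
  ∃ A : Matrix (Fin n) (Fin 2) ℂ, A.rank = 2 ∧ pluckerSupport A = σ

/-- The 0/1 vertex `Λ_p = ∑_{i∈p} e_i` of the hypersimplex associated with a
subset `p` of indices. -/
def vertexOf {n : ℕ} (p : Finset (Fin n)) : Fin n → ℝ :=
  fun i => if i ∈ p then 1 else 0

/-- The admissible polytope `P_σ = conv{e_i + e_j : {i,j} ∈ σ}`. -/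
def admPolytope {n : ℕ} (σ : Set (Finset (Fin n))) : Set (Fin n → ℝ) :=
  convexHull ℝ (vertexOf '' σ)

open Classical in
/-- The class of `i`: the member of the family containing `i`, or else `{i}`. -/
noncomputable def cls {n : ℕ} (F : Finset (Finset (Fin n))) (i : Fin n) : Finset (Fin n) :=
  if h : ∃ S ∈ F, i ∈ S then h.choose else {i}

section
variable {n : ℕ} {F : Finset (Finset (Fin n))}

lemma cls_cases (i : Fin n) : (cls F i ∈ F ∧ i ∈ cls F i) ∨ cls F i = {i} := by
  unfold cls
  split_ifs with h
  · exact Or.inl h.choose_spec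
  · exact Or.inr rfl

lemma mem_cls (i : Fin n) : i ∈ cls F i := by
  rcases cls_cases (F := F) i with h | h
  · exact h.2
  · rw [h]; simp

lemma cls_eq (hd : ∀ S ∈ F, ∀ S' ∈ F, S ≠ S' → Disjoint S S') {S : Finset (Fin n)}
    (hS : S ∈ F) {i : Fin n} (hi : i ∈ S) : cls F i = S := by
  have h : ∃ S ∈ F, i ∈ S := ⟨S, hS, hi⟩
  have h2 : cls F i = h.choose := by unfold cls; rw [dif_pos h]
  by_contra hne
  rw [h2] at hne
  exact Finset.disjoint_left.1 (hd _ h.choose_spec.1 _ hS hne) h.choose_spec.2 hi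

lemma cls_of_mem (hd : ∀ S ∈ F, ∀ S' ∈ F, S ≠ S' → Disjoint S S') {i j : Fin n}
    (hj : j ∈ cls F i) : cls F j = cls F i := by
  rcases cls_cases (F := F) i with h | h
  · exact cls_eq hd h.1 hj
  · rw [h] at hj
    rw [Finset.mem_singleton.1 hj]

lemma vertexOf_pair {i j : Fin n} (h : i ≠ j) :
    vertexOf {i, j} = (Pi.single i 1 + Pi.single j 1 : Fin n → ℝ) := by
  ext k
  simp only [vertexOf, Finset.mem_insert, Finset.mem_singleton, Pi.add_apply, Pi.single_apply]
  by_cases h1 : k = i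
  · subst h1; simp [h]
  · simp [h1]

lemma sum_vertexOf {i j : Fin n} (h : i ≠ j) (S : Finset (Fin n)) :
    ∑ k ∈ S, vertexOf {i, j} k = (if i ∈ S then 1 else 0) + (if j ∈ S then (1 : ℝ) else 0) := by
  rw [vertexOf_pair h]
  simp [Finset.sum_add_distrib, Pi.single_apply]

lemma vertex_mem (hd : ∀ S ∈ F, ∀ S' ∈ F, S ≠ S' → Disjoint S S') {i j : Fin n}
    (h : cls F i ≠ cls F j) :
    vertexOf {i, j} ∈ hypersimplex n 2 ∩ {x | ∀ S ∈ F, ∑ i ∈ S, x i ≤ 1} := by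
  have hij : i ≠ j := fun e => h (by rw [e])
  refine ⟨⟨fun k => ?_, ?_⟩, fun S hS => ?_⟩
  · unfold vertexOf; split_ifs <;> norm_num
  · rw [sum_vertexOf hij]; norm_num
  · rw [sum_vertexOf hij]
    by_cases h1 : i ∈ S <;> by_cases h2 : j ∈ S <;> simp [h1, h2]
    exact absurd ((cls_eq hd hS h1).trans (cls_eq hd hS h2).symm) h

lemma cls_sum_le {x : Fin n → ℝ}
    (hx : x ∈ hypersimplex n 2 ∩ {x | ∀ S ∈ F, ∑ i ∈ S, x i ≤ 1}) (i : Fin n) :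
    ∑ k ∈ cls F i, x k ≤ 1 := by
  rcases cls_cases (F := F) i with h | h
  · exact hx.2 _ h.1
  · rw [h]; simpa using (hx.1.1 i).2

lemma convex_Q : Convex ℝ (hypersimplex n 2 ∩ {x | ∀ S ∈ F, ∑ i ∈ S, x i ≤ 1}) := by
  intro x hx y hy a b ha hb hab
  refine ⟨⟨fun k => ⟨?_, ?_⟩, ?_⟩, fun S hS => ?_⟩
  · have := (hx.1.1 k).1
    have := (hy.1.1 k).1
    simp only [Pi.add_apply, Pi.smul_apply, smul_eq_mul]
    positivity
  · have := (hx.1.1 k).2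
    have := (hy.1.1 k).2
    simp only [Pi.add_apply, Pi.smul_apply, smul_eq_mul]
    nlinarith
  · simp only [Pi.add_apply, Pi.smul_apply, smul_eq_mul, Finset.sum_add_distrib,
      ← Finset.mul_sum, hx.1.2, hy.1.2]
    rw [← add_mul, hab, one_mul]
  · have := hx.2 S hS
    have := hy.2 S hS
    simp only [Pi.add_apply, Pi.smul_apply, smul_eq_mul, Finset.sum_add_distrib,
      ← Finset.mul_sum]
    nlinarith

/-- Maximal value of a linear functional is attained at an allowed pair. -/
lemma exists_pair (hn : 0 < n) (hd : ∀ S ∈ F, ∀ S' ∈ F, S ≠ S' → Disjoint S S')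
    (hex : ∀ i, ∃ j, j ∉ cls F i) {x : Fin n → ℝ}
    (hx : x ∈ hypersimplex n 2 ∩ {x | ∀ S ∈ F, ∑ i ∈ S, x i ≤ 1}) (l : Fin n → ℝ) :
    ∃ i j, cls F i ≠ cls F j ∧ ∑ k, x k * l k ≤ l i + l j := by
  haveI : Nonempty (Fin n) := ⟨⟨0, hn⟩⟩
  obtain ⟨i, -, hi⟩ := Finset.exists_max_image Finset.univ l Finset.univ_nonempty
  obtain ⟨j0, hj0⟩ := hex i
  obtain ⟨j, hj, hjm⟩ := Finset.exists_max_image (cls F i)ᶜ l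
    ⟨j0, Finset.mem_compl.2 hj0⟩
  have hj' : j ∉ cls F i := Finset.mem_compl.1 hj
  refine ⟨i, j, fun e => hj' (e ▸ mem_cls j), ?_⟩
  have hs := cls_sum_le hx i
  have htot := hx.1.2
  rw [← Finset.sum_add_sum_compl (cls F i)] at htot ⊢
  have h1 : ∑ k ∈ cls F i, x k * l k ≤ (∑ k ∈ cls F i, x k) * l i := by
    rw [Finset.sum_mul]
    exact Finset.sum_le_sum fun k _ =>
      mul_le_mul_of_nonneg_left (hi k (Finset.mem_univ k)) (hx.1.1 k).1
  have h2 : ∑ k ∈ (cls F i)ᶜ, x k * l k ≤ (∑ k ∈ (cls F i)ᶜ, x k) * l j := by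
    rw [Finset.sum_mul]
    exact Finset.sum_le_sum fun k hk =>
      mul_le_mul_of_nonneg_left (hjm k hk) (hx.1.1 k).1
  have h3 := hi j (Finset.mem_univ j)
  push_cast at htot
  have h4 : ∑ k ∈ (cls F i)ᶜ, x k = 2 - ∑ k ∈ cls F i, x k := by linarith
  rw [h4] at h2
  nlinarith

lemma Q_eq (hn : 0 < n) (hd : ∀ S ∈ F, ∀ S' ∈ F, S ≠ S' → Disjoint S S')
    (hex : ∀ i, ∃ j, j ∉ cls F i) :
    hypersimplex n 2 ∩ {x | ∀ S ∈ F, ∑ i ∈ S, x i ≤ 1} =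
      admPolytope {p | ∃ i j : Fin n, p = {i, j} ∧ cls F i ≠ cls F j} := by
  apply Set.Subset.antisymm
  · intro x hx
    by_contra hnot
    have hcl : IsClosed (admPolytope {p | ∃ i j : Fin n, p = {i, j} ∧ cls F i ≠ cls F j}) :=
      ((Set.toFinite _).image _).isClosed_convexHull ℝ
    obtain ⟨f, u, hu, hfx⟩ := geometric_hahn_banach_closed_point (convex_convexHull ℝ _) hcl hnot
    obtain ⟨i, j, hij, hle⟩ := exists_pair hn hd hex hx (fun k => f (Pi.single k 1))
    have h1 : f x = ∑ k, x k * f (Pi.single k 1) := by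
      conv_lhs => rw [pi_eq_sum_univ' x]
      simp only [map_sum, map_smul, smul_eq_mul]
    have h2 := hu (vertexOf {i, j}) (subset_convexHull ℝ _ ⟨_, ⟨i, j, rfl, hij⟩, rfl⟩)
    rw [vertexOf_pair (fun e => hij (by rw [e])), map_add] at h2
    linarith
  · refine convexHull_min ?_ convex_Q
    rintro _ ⟨_, ⟨i, j, rfl, hij⟩, rfl⟩
    exact vertex_mem hd hij

lemma admissible_cls (hn : 0 < n) (hex : ∀ i, ∃ j, j ∉ cls F i) :
    IsAdmissible {p | ∃ i j : Fin n, p = {i, j} ∧ cls F i ≠ cls F j} := by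
  let c : Fin n → ℂ := fun i => ((Fintype.equivFin (Finset (Fin n)) (cls F i) : ℕ) : ℂ)
  have hc : ∀ i j, c i = c j ↔ cls F i = cls F j := by
    intro i j
    simp only [c, Nat.cast_inj, Fin.val_inj, EmbeddingLike.apply_eq_iff_eq]
  let A : Matrix (Fin n) (Fin 2) ℂ := Matrix.of fun i k => if k = 0 then 1 else c i
  have hA : ∀ i j, plucker A i j = c j - c i := by
    intro i j; simp [plucker, A]
  refine ⟨A, ?_, ?_⟩
  · obtain ⟨j, hj⟩ := hex ⟨0, hn⟩
    set i : Fin n := ⟨0, hn⟩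
    have hij : c i ≠ c j := fun e => hj (((hc _ _).1 e) ▸ mem_cls j)
    have hli : LinearIndependent ℂ A.col := by
      rw [Fintype.linearIndependent_iff]
      intro g hg
      have e1 := congrFun hg i
      have e2 := congrFun hg j
      simp [Fin.sum_univ_two, A] at e1 e2
      have h1 : g 1 * (c i - c j) = 0 := by linear_combination e1 - e2
      have h1' : g 1 = 0 := (mul_eq_zero.1 h1).resolve_right (sub_ne_zero.2 hij)
      rw [h1'] at e1
      intro k
      fin_cases k
      · simpa using e1
      · exact h1'
    simpa using hli.rank_matrix
  · ext p
    constructor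
    · rintro ⟨i, j, -, hp, h⟩
      refine ⟨i, j, hp, fun e => h ?_⟩
      rw [hA, (hc i j).2 e, sub_self]
    · rintro ⟨i, j, hp, h⟩
      refine ⟨i, j, fun e => h (by rw [e]), hp, ?_⟩
      rw [hA, sub_ne_zero]
      exact fun e => h ((hc j i).1 e).symm

lemma finrank_Q (hn : 0 < n) (hd : ∀ S ∈ F, ∀ S' ∈ F, S ≠ S' → Disjoint S S')
    (h3 : ∀ i j, ∃ k, cls F k ≠ cls F i ∧ cls F k ≠ cls F j) :
    Module.finrank ℝ (affineSpan ℝ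
      (hypersimplex n 2 ∩ {x | ∀ S ∈ F, ∑ i ∈ S, x i ≤ 1})).direction = n - 1 := by
  set Q := hypersimplex n 2 ∩ {x | ∀ S ∈ F, ∑ i ∈ S, x i ≤ 1}
  let s : (Fin n → ℝ) →ₗ[ℝ] ℝ := ∑ i, LinearMap.proj i
  have hs : ∀ x, s x = ∑ i, x i := fun x => by simp [s]
  have hdir : (affineSpan ℝ Q).direction = LinearMap.ker s := by
    apply le_antisymm
    · rw [direction_affineSpan, vectorSpan_def, Submodule.span_le]
      rintro _ ⟨x, hx, y, hy, rfl⟩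
      simp only [SetLike.mem_coe, LinearMap.mem_ker, vsub_eq_sub, hs, Pi.sub_apply,
        Finset.sum_sub_distrib]
      rw [hx.1.2, hy.1.2, sub_self]
    · intro v hv
      rw [LinearMap.mem_ker, hs] at hv
      have hdiff : ∀ i j : Fin n, (Pi.single i 1 - Pi.single j 1 : Fin n → ℝ) ∈
          (affineSpan ℝ Q).direction := by
        intro i j
        obtain ⟨k, hi, hj⟩ := h3 i j
        have h1 := AffineSubspace.vsub_mem_direction
          (subset_affineSpan ℝ Q (vertex_mem hd hi)) (subset_affineSpan ℝ Q (vertex_mem hd hj))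
        rw [vertexOf_pair (fun e => hi (by rw [e])), vertexOf_pair (fun e => hj (by rw [e]))] at h1
        simpa using h1
      have hv' : v = ∑ i, v i • (Pi.single i 1 - Pi.single ⟨0, hn⟩ 1 : Fin n → ℝ) := by
        simp only [smul_sub, Finset.sum_sub_distrib, ← Finset.sum_smul, hv, zero_smul, sub_zero]
        ext m
        simp [Finset.sum_apply, Pi.single_apply]
      rw [hv']
      exact Submodule.sum_mem _ fun i _ => Submodule.smul_mem _ _ (hdiff _ _)
  rw [hdir]
  have hsurj : LinearMap.range s = ⊤ := by
    rw [LinearMap.range_eq_top]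
    intro r
    exact ⟨Pi.single ⟨0, hn⟩ r, by rw [hs]; simp⟩
  have := LinearMap.finrank_range_add_finrank_ker s
  rw [hsurj, finrank_top] at this
  simp at this
  omega

end

/-- for a nonempty family 𝒮 of pairwise disjoint subsets of
{1,…,n} of cardinalities between 2 and n−2, the polytope
Δ_{n,2} ∩ ⋂_{S∈𝒮} {∑_{i∈S} x_i ≤ 1} is an admissible polytope for G_{n,2};
and unless 𝒮 consists of exactly two sets covering {1,…,n}, it has affine
dimension n−1. -/
theorem stmt11 (n : ℕ) (hn : 4 ≤ n) (𝒮 : Finset (Finset (Fin n))) (hne : 𝒮.Nonempty)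
    (hdisj : ∀ S ∈ 𝒮, ∀ S' ∈ 𝒮, S ≠ S' → Disjoint S S')
    (hcard : ∀ S ∈ 𝒮, 2 ≤ S.card ∧ S.card ≤ n - 2)
    (Q : Set (Fin n → ℝ))
    (hQ : Q = hypersimplex n 2 ∩ {x | ∀ S ∈ 𝒮, ∑ i ∈ S, x i ≤ 1}) :
    (∃ σ : Set (Finset (Fin n)), IsAdmissible σ ∧ Q = admPolytope σ) ∧
    ((¬ ∃ S₁ S₂ : Finset (Fin n), S₁ ≠ S₂ ∧ 𝒮 = {S₁, S₂} ∧ S₁ ∪ S₂ = Finset.univ) →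
      Module.finrank ℝ (affineSpan ℝ Q).direction = n - 1) := by
  have hn0 : 0 < n := by omega
  have hcc : ∀ i, (cls 𝒮 i).card ≤ n - 2 := by
    intro i
    rcases cls_cases (F := 𝒮) i with h | h
    · exact (hcard _ h.1).2
    · rw [h, Finset.card_singleton]; omega
  have hex : ∀ i, ∃ j, j ∉ cls 𝒮 i := by
    intro i
    by_contra! hcon
    have h1 := hcc i
    rw [Finset.eq_univ_iff_forall.2 hcon, Finset.card_univ, Fintype.card_fin] at h1
    omega
  subst hQ
  refine ⟨⟨_, admissible_cls hn0 hex, Q_eq hn0 hdisj hex⟩, fun hnot => ?_⟩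
  refine finrank_Q hn0 hdisj fun i j => ?_
  by_contra! hcon
  have hcov : cls 𝒮 i ∪ cls 𝒮 j = Finset.univ := by
    rw [Finset.eq_univ_iff_forall]
    intro k
    rw [Finset.mem_union]
    by_cases h : cls 𝒮 k = cls 𝒮 i
    · exact Or.inl (h ▸ mem_cls k)
    · exact Or.inr (hcon k h ▸ mem_cls k)
  have hsum : n ≤ (cls 𝒮 i).card + (cls 𝒮 j).card := by
    have h1 := Finset.card_union_le (cls 𝒮 i) (cls 𝒮 j)
    rwa [hcov, Finset.card_univ, Fintype.card_fin] at h1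
  have hi := hcc i
  have hj := hcc j
  have hmem : ∀ k, 2 ≤ (cls 𝒮 k).card → cls 𝒮 k ∈ 𝒮 := by
    intro k hk
    rcases cls_cases (F := 𝒮) k with h | h
    · exact h.1
    · rw [h, Finset.card_singleton] at hk; omega
  have hi2 := hmem i (by omega)
  have hj2 := hmem j (by omega)
  refine hnot ⟨cls 𝒮 i, cls 𝒮 j, fun e => ?_, ?_, hcov⟩
  · rw [← e, Finset.union_self] at hcov
    rw [hcov, Finset.card_univ, Fintype.card_fin] at hi
    omega
  · ext S
    simp only [Finset.mem_insert, Finset.mem_singleton]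
    constructor
    · intro hS
      obtain ⟨k, hk⟩ := Finset.card_pos.1 (by have := (hcard S hS).1; omega : 0 < S.card)
      rw [← cls_eq hdisj hS hk]
      by_cases h : cls 𝒮 k = cls 𝒮 i
      · exact Or.inl h
      · exact Or.inr (hcon k h)
    · rintro (rfl | rfl)
      · exact hi2
      · exact hj2
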